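/- (Modica-type gradient estimate for traveling waves.) Let n ≥ 1, let F : ℝ → ℝ be C², and assume F(s) ≥ 0 for all s ∈ [−1, 1]. Let c > 0 and let u : ℝⁿ → ℝ be a C³ solution of Δu + c ∂u/∂x_n = F'(u) on ℝⁿ with |u| ≤ 1. Then |∇u(p)|² ≤ 2 F(u(p)) for every p ∈ ℝⁿ. -/

import Mathlib

/-!
Bernstein's argument, applied to `η² |∇u|² + l u²` with a cutoff `η`, bounds `|∇u|`. Write
`L = Δ + b · ∇`, so that `L u = F'(u)`, and let `P = |∇u|² - 2 G(u)`. The Bochner formula and the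
Kato inequality `|∇|∇u|²| ≤ 2 |∇u| |D²u|` give
`2 |∇u|² (G' (G' - F') + (F'' - G'') |∇u|²) ≤ |∇u|² L P + 2 |G'| |∇u| |∇P|`,
with `F` and `G` evaluated at `u`. For `G = F` the left-hand side vanishes and nothing can be
concluded. But if the estimate failed at `y`, one could take `G = F + h` with a small `h` such that
`h' > 0` and `h'' = -κ h'` for a large `κ`, keeping `P y > 0` and making the left-hand side bounded
below by a positive constant wherever `P ≥ P y`. As `P` is bounded above, there are points with
`P ≥ P y` at which `|∇P|` and the positive part of `L P` are arbitrarily small, a contradiction.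
-/

open Real Filter

/-- Partial derivative of `f : ℝⁿ → ℝ` in the `i`-th coordinate direction. -/
noncomputable def pd {n : ℕ} (i : Fin n) (f : (Fin n → ℝ) → ℝ)
    (p : Fin n → ℝ) : ℝ :=
  deriv (fun t : ℝ => f (Function.update p i t)) (p i)

open InnerProductSpace Metric Module
open scoped Gradient Laplacian RealInnerProductSpace Topology

section Derivatives

variable {E G : Type*} [NormedAddCommGroup E] [NormedAddCommGroup G] [NormedSpace ℝ G]

lemma contDiff_fderiv_apply_const [NormedSpace ℝ E] {f : E → G} {m k : WithTop ℕ∞}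
    (hf : ContDiff ℝ k f) (hmk : m + 1 ≤ k) (v : E) : ContDiff ℝ m fun q => fderiv ℝ f q v :=
  (hf.fderiv_right hmk).clm_apply contDiff_const

lemma fderiv_fderiv_apply_comm [NormedSpace ℝ E] {f : E → G} (hf : ContDiff ℝ 2 f) (p v w : E) :
    fderiv ℝ (fun q => fderiv ℝ f q v) p w = fderiv ℝ (fun q => fderiv ℝ f q w) p v := by
  have hf' : DifferentiableAt ℝ (fderiv ℝ f) p :=
    (hf.fderiv_right (m := 1) (by norm_num)).differentiable one_ne_zero p
  rw [fderiv_clm_apply hf' (differentiableAt_const v),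
    fderiv_clm_apply hf' (differentiableAt_const w)]
  simpa using hf.contDiffAt.isSymmSndFDerivAt (by simp) w v

variable [InnerProductSpace ℝ E]

lemma contDiff_gradient [CompleteSpace E] {f : E → ℝ} {m k : WithTop ℕ∞} (hf : ContDiff ℝ k f)
    (hmk : m + 1 ≤ k) : ContDiff ℝ m (∇ f) :=
  (toDual ℝ E).symm.contDiff.comp (hf.fderiv_right hmk)

lemma gradient_comp [CompleteSpace E] {φ : ℝ → ℝ} {f : E → ℝ} {p : E}
    (hφ : DifferentiableAt ℝ φ (f p)) (hf : DifferentiableAt ℝ f p) :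
    ∇ (fun q => φ (f q)) p = deriv φ (f p) • ∇ f p := by
  have h : HasFDerivAt (fun q => φ (f q)) (deriv φ (f p) • fderiv ℝ f p) p :=
    hφ.hasDerivAt.comp_hasFDerivAt p hf.hasFDerivAt
  rw [gradient, h.fderiv, map_smul, gradient]

lemma gradient_sub [CompleteSpace E] {f g : E → ℝ} {p : E} (hf : DifferentiableAt ℝ f p)
    (hg : DifferentiableAt ℝ g p) : ∇ (fun q => f q - g q) p = ∇ f p - ∇ g p := by
  simp only [gradient, fderiv_fun_sub hf hg, map_sub]

lemma contDiff_norm_sub_sq (a : E) {k : WithTop ℕ∞} : ContDiff ℝ k fun q => ‖q - a‖ ^ 2 :=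
  (contDiff_id.sub contDiff_const).norm_sq ℝ

lemma gradient_norm_sub_sq [CompleteSpace E] (a p : E) :
    ∇ (fun q => ‖q - a‖ ^ 2) p = (2 : ℝ) • (p - a) := by
  refine ext_inner_right ℝ fun v => ?_
  have h : HasFDerivAt (fun q => ‖q - a‖ ^ 2) _ p := ((hasFDerivAt_id p).sub_const a).norm_sq
  rw [inner_gradient_left, h.fderiv]
  simp [real_inner_smul_left, inner_sub_left]

variable [FiniteDimensional ℝ E]

lemma laplacian_eq_sum_fderiv_fderiv {ι : Type*} [Fintype ι] (e : OrthonormalBasis ι ℝ E)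
    {f : E → G} (hf : ContDiff ℝ 2 f) (p : E) :
    Δ f p = ∑ i, fderiv ℝ (fun q => fderiv ℝ f q (e i)) p (e i) := by
  have hf' : DifferentiableAt ℝ (fderiv ℝ f) p :=
    (hf.fderiv_right (m := 1) (by norm_num)).differentiable one_ne_zero p
  simp [laplacian_eq_iteratedFDeriv_orthonormalBasis f e, iteratedFDeriv_two_apply,
    fderiv_clm_apply hf' (differentiableAt_const _)]

end Derivatives

section MaximumPrinciple

lemma deriv_deriv_nonpos_of_isLocalMax {φ : ℝ → ℝ} {x : ℝ} (hφ : ContinuousAt φ x)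
    (h : IsLocalMax φ x) : deriv (deriv φ) x ≤ 0 := by
  by_contra! hpos
  have hmin := isLocalMin_of_deriv_deriv_pos hpos h.deriv_eq_zero hφ
  have hconst : φ =ᶠ[𝓝 x] fun _ => φ x := by
    filter_upwards [h, hmin] with y hmax hmin using le_antisymm hmax hmin
  have hzero : deriv (deriv φ) x = 0 := by simpa using hconst.deriv.deriv_eq
  exact hpos.ne' hzero

lemma fderiv_fderiv_apply_nonpos_of_isLocalMax {E : Type*} [NormedAddCommGroup E]
    [NormedSpace ℝ E] {f : E → ℝ} {p : E} (hf : ContDiff ℝ 2 f) (h : IsLocalMax f p) (v : E) :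
    fderiv ℝ (fun q => fderiv ℝ f q v) p v ≤ 0 := by
  have hline (t : ℝ) : HasDerivAt (fun t : ℝ => p + t • v) v t := by
    simpa using ((hasDerivAt_id t).smul_const v).const_add p
  have hderiv {g : E → ℝ} (hg : Differentiable ℝ g) :
      deriv (fun t : ℝ => g (p + t • v)) = fun t => fderiv ℝ g (p + t • v) v :=
    funext fun t => ((hg _).hasFDerivAt.comp_hasDerivAt t (hline t)).deriv
  have hmax : IsLocalMax (fun t : ℝ => f (p + t • v)) 0 :=
    IsLocalMax.comp_continuous (by simpa using h) (hline 0).continuousAt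
  have hcont : Continuous fun t : ℝ => f (p + t • v) := hf.continuous.comp (by fun_prop)
  have hnonpos := deriv_deriv_nonpos_of_isLocalMax hcont.continuousAt hmax
  rw [hderiv (hf.differentiable two_ne_zero), hderiv
    ((contDiff_fderiv_apply_const (m := 1) hf (by norm_num) v).differentiable one_ne_zero)]
    at hnonpos
  simpa using hnonpos

lemma le_of_forall_sphere_of_forall_isLocalMax {α : Type*} [PseudoMetricSpace α] [ProperSpace α]
    {f : α → ℝ} (hf : Continuous f) {a : α} {r C : ℝ} (hr : 0 ≤ r)
    (hsphere : ∀ p ∈ sphere a r, f p ≤ C) (hball : ∀ p ∈ ball a r, IsLocalMax f p → f p ≤ C) :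
    f a ≤ C := by
  obtain ⟨p, hp, hmax⟩ := (isCompact_closedBall a r).exists_isMaxOn
    ⟨a, mem_closedBall_self hr⟩ hf.continuousOn
  refine (hmax (mem_closedBall_self hr)).trans ?_
  rcases (mem_closedBall.1 hp).lt_or_eq with hlt | heq
  · exact hball p hlt (hmax.isLocalMax
      (mem_of_superset (isOpen_ball.mem_nhds hlt) ball_subset_closedBall))
  · exact hsphere p heq

end MaximumPrinciple

section DriftLaplacian

variable {E G : Type*} [NormedAddCommGroup E] [InnerProductSpace ℝ E] [FiniteDimensional ℝ E]

/-- The Laplacian with constant drift `b`, that is, the operator `Δ + b · ∇`; for the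
traveling-wave equation `b = c eₙ`. -/
noncomputable def driftLaplacian [NormedAddCommGroup G] [NormedSpace ℝ G] (b : E) (f : E → G)
    (p : E) : G :=
  Δ f p + fderiv ℝ f p b

/-- The squared Hilbert–Schmidt norm `|Df|²` of the derivative, computed in an orthonormal basis;
for `f = ∇ u` it is the squared norm of the Hessian of `u`. -/
noncomputable def fderivNormSq [NormedAddCommGroup G] [NormedSpace ℝ G] (f : E → G) (p : E) : ℝ :=
  ∑ i, ‖fderiv ℝ f p (stdOrthonormalBasis ℝ E i)‖ ^ 2

section NormedSpace

variable [NormedAddCommGroup G] [NormedSpace ℝ G] {f g : E → G} {b p : E}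

lemma driftLaplacian_add (hf : ContDiff ℝ 2 f) (hg : ContDiff ℝ 2 g) :
    driftLaplacian b (fun q => f q + g q) p = driftLaplacian b f p + driftLaplacian b g p := by
  have hΔ : Δ (fun q => f q + g q) p = Δ f p + Δ g p :=
    hf.contDiffAt.laplacian_add hg.contDiffAt
  rw [driftLaplacian, hΔ, fderiv_fun_add (hf.differentiable two_ne_zero p)
    (hg.differentiable two_ne_zero p), add_apply, driftLaplacian, driftLaplacian]
  abel

lemma driftLaplacian_clm_comp {G' : Type*} [NormedAddCommGroup G'] [NormedSpace ℝ G']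
    (l : G →L[ℝ] G') (hf : ContDiff ℝ 2 f) :
    driftLaplacian b (fun q => l (f q)) p = l (driftLaplacian b f p) := by
  have hΔ : Δ (fun q => l (f q)) p = l (Δ f p) := hf.contDiffAt.laplacian_CLM_comp_left
  have hD : HasFDerivAt (fun q => l (f q)) (l.comp (fderiv ℝ f p)) p :=
    l.hasFDerivAt.comp p (hf.differentiable two_ne_zero p).hasFDerivAt
  rw [driftLaplacian, hΔ, hD.fderiv, driftLaplacian, map_add, ContinuousLinearMap.comp_apply]

lemma driftLaplacian_sub (hf : ContDiff ℝ 2 f) (hg : ContDiff ℝ 2 g) :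
    driftLaplacian b (fun q => f q - g q) p = driftLaplacian b f p - driftLaplacian b g p := by
  have hneg : driftLaplacian b (fun q => -g q) p = -driftLaplacian b g p :=
    driftLaplacian_clm_comp (-ContinuousLinearMap.id ℝ G) hg
  simp only [sub_eq_add_neg, driftLaplacian_add hf hg.neg, hneg]

lemma driftLaplacian_fderiv_apply (hf : ContDiff ℝ 3 f) (v : E) :
    driftLaplacian b (fun q => fderiv ℝ f q v) p = fderiv ℝ (driftLaplacian b f) p v := by
  have hf₂ : ContDiff ℝ 2 f := hf.of_le (by norm_num)
  have hDf (w : E) : ContDiff ℝ 2 fun q => fderiv ℝ f q w :=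
    contDiff_fderiv_apply_const hf (by norm_num) w
  have hDDf (w : E) : Differentiable ℝ fun q => fderiv ℝ (fun q => fderiv ℝ f q w) q w :=
    (contDiff_fderiv_apply_const (m := 1) (hDf w) (by norm_num) w).differentiable one_ne_zero
  have hL : driftLaplacian b f = fun q =>
      ∑ i, fderiv ℝ (fun q => fderiv ℝ f q (stdOrthonormalBasis ℝ E i)) q
        (stdOrthonormalBasis ℝ E i) + fderiv ℝ f q b :=
    funext fun q => by rw [driftLaplacian,
      laplacian_eq_sum_fderiv_fderiv (stdOrthonormalBasis ℝ E) hf₂]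
  have hcomm (w : E) : (fun q => fderiv ℝ (fun q => fderiv ℝ f q v) q w) =
      fun q => fderiv ℝ (fun q => fderiv ℝ f q w) q v :=
    funext fun q => fderiv_fderiv_apply_comm hf₂ q v w
  rw [hL, fderiv_fun_add (DifferentiableAt.fun_sum fun i _ => hDDf _ p)
      ((hDf b).differentiable two_ne_zero p), fderiv_fun_sum fun i _ => hDDf _ p,
    add_apply, sum_apply, driftLaplacian, fderiv_fderiv_apply_comm hf₂,
    laplacian_eq_sum_fderiv_fderiv (stdOrthonormalBasis ℝ E) (hDf v)]
  congr 1
  refine Finset.sum_congr rfl fun i _ => ?_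
  rw [hcomm, fderiv_fderiv_apply_comm (hDf _)]

end NormedSpace

section InnerProductSpace

variable [NormedAddCommGroup G] [InnerProductSpace ℝ G] {f g : E → G} {b p : E}

lemma driftLaplacian_inner (hf : ContDiff ℝ 2 f) (hg : ContDiff ℝ 2 g) :
    driftLaplacian b (fun q => ⟪f q, g q⟫) p =
      ⟪f p, driftLaplacian b g p⟫ + ⟪driftLaplacian b f p, g p⟫ +
        2 * ∑ i, ⟪fderiv ℝ f p (stdOrthonormalBasis ℝ E i),
          fderiv ℝ g p (stdOrthonormalBasis ℝ E i)⟫ := by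
  have hf₁ : Differentiable ℝ f := hf.differentiable two_ne_zero
  have hg₁ : Differentiable ℝ g := hg.differentiable two_ne_zero
  have hD {f : E → G} (hf : ContDiff ℝ 2 f) (v : E) :
      Differentiable ℝ fun q => fderiv ℝ f q v :=
    (contDiff_fderiv_apply_const (m := 1) hf (by norm_num) v).differentiable one_ne_zero
  have hinner (v : E) : (fun q => fderiv ℝ (fun q => ⟪f q, g q⟫) q v) =
      fun q => ⟪f q, fderiv ℝ g q v⟫ + ⟪fderiv ℝ f q v, g q⟫ :=
    funext fun q => fderiv_inner_apply ℝ (hf₁ q) (hg₁ q) v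
  have hinner₂ (v : E) : fderiv ℝ (fun q => fderiv ℝ (fun q => ⟪f q, g q⟫) q v) p v =
      ⟪f p, fderiv ℝ (fun q => fderiv ℝ g q v) p v⟫ +
        ⟪fderiv ℝ (fun q => fderiv ℝ f q v) p v, g p⟫ +
        2 * ⟪fderiv ℝ f p v, fderiv ℝ g p v⟫ := by
    rw [hinner, fderiv_fun_add ((hf₁ p).inner ℝ (hD hg v p)) ((hD hf v p).inner ℝ (hg₁ p)),
      add_apply, fderiv_inner_apply ℝ (hf₁ p) (hD hg v p),
      fderiv_inner_apply ℝ (hD hf v p) (hg₁ p)]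
    ring
  simp only [driftLaplacian, laplacian_eq_sum_fderiv_fderiv (stdOrthonormalBasis ℝ E) hf,
    laplacian_eq_sum_fderiv_fderiv (stdOrthonormalBasis ℝ E) hg,
    laplacian_eq_sum_fderiv_fderiv (stdOrthonormalBasis ℝ E) (hf.inner ℝ hg), hinner₂,
    fderiv_inner_apply ℝ (hf₁ p) (hg₁ p), Finset.sum_add_distrib, ← Finset.mul_sum,
    inner_add_left, inner_add_right, inner_sum, sum_inner]
  ring

lemma driftLaplacian_norm_sq (hf : ContDiff ℝ 2 f) :
    driftLaplacian b (fun q => ‖f q‖ ^ 2) p =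
      2 * ⟪f p, driftLaplacian b f p⟫ + 2 * fderivNormSq f p := by
  simp only [← real_inner_self_eq_norm_sq, fderivNormSq]
  rw [driftLaplacian_inner hf hf, real_inner_comm (f p)]
  ring

lemma norm_gradient_norm_sq_sq_le (hf : DifferentiableAt ℝ f p) :
    ‖∇ (fun q => ‖f q‖ ^ 2) p‖ ^ 2 ≤ 4 * ‖f p‖ ^ 2 * fderivNormSq f p := by
  rw [← (stdOrthonormalBasis ℝ E).sum_sq_inner_left, fderivNormSq, Finset.mul_sum]
  refine Finset.sum_le_sum fun i _ => ?_
  set v := stdOrthonormalBasis ℝ E i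
  have hD : ⟪∇ (fun q => ‖f q‖ ^ 2) p, v⟫ = 2 * ⟪f p, fderiv ℝ f p v⟫ := by
    rw [inner_gradient_left, hf.hasFDerivAt.norm_sq.fderiv]
    simp
  calc ⟪∇ (fun q => ‖f q‖ ^ 2) p, v⟫ ^ 2 = 4 * ⟪f p, fderiv ℝ f p v⟫ ^ 2 := by rw [hD]; ring
    _ ≤ 4 * (‖f p‖ * ‖fderiv ℝ f p v‖) ^ 2 := by
      gcongr 4 * ?_
      exact sq_le_sq.2 ((abs_real_inner_le_norm _ _).trans (le_abs_self _))
    _ = 4 * ‖f p‖ ^ 2 * ‖fderiv ℝ f p v‖ ^ 2 := by ring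

end InnerProductSpace

section Real

variable {f g : E → ℝ} {b p : E}

lemma driftLaplacian_const_mul (c : ℝ) (hf : ContDiff ℝ 2 f) :
    driftLaplacian b (fun q => c * f q) p = c * driftLaplacian b f p :=
  driftLaplacian_clm_comp (c • ContinuousLinearMap.id ℝ ℝ) hf

lemma driftLaplacian_mul (hf : ContDiff ℝ 2 f) (hg : ContDiff ℝ 2 g) :
    driftLaplacian b (fun q => f q * g q) p =
      f p * driftLaplacian b g p + g p * driftLaplacian b f p + 2 * ⟪∇ f p, ∇ g p⟫ := by
  have h := driftLaplacian_inner (b := b) (p := p) hg hf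
  rw [← (stdOrthonormalBasis ℝ E).sum_inner_mul_inner]
  simp only [inner_gradient_left, inner_gradient_right]
  simpa [mul_comm, add_comm] using h

lemma driftLaplacian_sq (hf : ContDiff ℝ 2 f) :
    driftLaplacian b (fun q => f q ^ 2) p =
      2 * f p * driftLaplacian b f p + 2 * ‖∇ f p‖ ^ 2 := by
  simp only [pow_two, driftLaplacian_mul hf hf, real_inner_self_eq_norm_mul_norm]
  ring

lemma driftLaplacian_comp {φ : ℝ → ℝ} (hφ : ContDiff ℝ 2 φ) (hf : ContDiff ℝ 2 f) :
    driftLaplacian b (fun q => φ (f q)) p =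
      deriv (deriv φ) (f p) * ‖∇ f p‖ ^ 2 + deriv φ (f p) * driftLaplacian b f p := by
  have hf₁ : Differentiable ℝ f := hf.differentiable two_ne_zero
  have hφ' : Differentiable ℝ (deriv φ) := by fun_prop (disch := norm_num)
  have hchain {ψ : ℝ → ℝ} (hψ : Differentiable ℝ ψ) (q v : E) :
      fderiv ℝ (fun q => ψ (f q)) q v = deriv ψ (f q) * fderiv ℝ f q v := by
    rw [← inner_gradient_left, gradient_comp (hψ _) (hf₁ q), real_inner_smul_left,
      inner_gradient_left]
  have hchain₂ (v : E) : fderiv ℝ (fun q => fderiv ℝ (fun q => φ (f q)) q v) p v =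
      deriv (deriv φ) (f p) * fderiv ℝ f p v ^ 2 +
        deriv φ (f p) * fderiv ℝ (fun q => fderiv ℝ f q v) p v := by
    have hDf : Differentiable ℝ fun q => fderiv ℝ f q v :=
      (contDiff_fderiv_apply_const (m := 1) hf (by norm_num) v).differentiable one_ne_zero
    simp only [hchain (hφ.differentiable two_ne_zero)]
    have hφf : DifferentiableAt ℝ (fun q => deriv φ (f q)) p := (hφ' _).comp p (hf₁ p)
    rw [fderiv_fun_mul hφf (hDf p)]
    simp only [add_apply, smul_apply, smul_eq_mul, hchain hφ']
    ring
  have hφf : ContDiff ℝ 2 fun q => φ (f q) := hφ.comp hf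
  rw [driftLaplacian, driftLaplacian, hchain (hφ.differentiable two_ne_zero),
    laplacian_eq_sum_fderiv_fderiv (stdOrthonormalBasis ℝ E) hφf,
    laplacian_eq_sum_fderiv_fderiv (stdOrthonormalBasis ℝ E) hf,
    ← (stdOrthonormalBasis ℝ E).sum_sq_inner_left]
  simp only [hchain₂, inner_gradient_left, Finset.sum_add_distrib, ← Finset.mul_sum]
  ring

lemma driftLaplacian_gradient (hf : ContDiff ℝ 3 f) :
    driftLaplacian b (∇ f) p = ∇ (driftLaplacian b f) p := by
  refine ext_inner_left ℝ fun v => ?_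
  have h := driftLaplacian_clm_comp (b := b) (p := p) (innerSL ℝ v)
    (contDiff_gradient (m := 2) hf (by norm_num))
  simp only [innerSL_apply_apply, inner_gradient_right, RCLike.conj_to_real] at h
  rw [← h, inner_gradient_right, driftLaplacian_fderiv_apply hf]
  simp

lemma driftLaplacian_nonpos_of_isLocalMax (hf : ContDiff ℝ 2 f) (h : IsLocalMax f p) :
    driftLaplacian b f p ≤ 0 := by
  rw [driftLaplacian, h.fderiv_eq_zero, zero_apply, add_zero,
    laplacian_eq_sum_fderiv_fderiv (stdOrthonormalBasis ℝ E) hf]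
  exact Finset.sum_nonpos fun i _ => fderiv_fderiv_apply_nonpos_of_isLocalMax hf h _

lemma driftLaplacian_norm_sub_sq (a : E) :
    driftLaplacian b (fun q => ‖q - a‖ ^ 2) p = 2 * finrank ℝ E + 2 * ⟪p - a, b⟫ := by
  have hD (q : E) : fderiv ℝ (fun q => q - a) q = ContinuousLinearMap.id ℝ E :=
    ((hasFDerivAt_id q).sub_const a).fderiv
  have hL : driftLaplacian b (fun q => q - a) p = b := by
    rw [driftLaplacian, laplacian_eq_sum_fderiv_fderiv (stdOrthonormalBasis ℝ E) (by fun_prop)]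
    simp [hD]
  rw [driftLaplacian_norm_sq (by fun_prop), hL, fderivNormSq]
  simp only [hD, ContinuousLinearMap.id_apply, OrthonormalBasis.norm_eq_one, one_pow,
    Finset.sum_const, Finset.card_univ, Fintype.card_fin, nsmul_eq_mul, mul_one]
  ring

end Real

end DriftLaplacian

section BallCutoff

variable {E : Type*} [NormedAddCommGroup E]

/-- The cutoff `1 - |q - a|²` on the unit ball about `a`, used to localise Bernstein's argument. It
is not truncated, hence smooth, and is negative outside the ball. -/
def ballCutoff (a q : E) : ℝ :=
  1 - ‖q - a‖ ^ 2

lemma ballCutoff_eq_zero {a p : E} (hp : p ∈ sphere a 1) : ballCutoff a p = 0 := by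
  simp [ballCutoff, mem_sphere_iff_norm.1 hp]

lemma ballCutoff_mem_Icc {a p : E} (hp : p ∈ ball a 1) : ballCutoff a p ∈ Set.Icc (0 : ℝ) 1 := by
  have hle : ‖p - a‖ ^ 2 ≤ 1 := pow_le_one₀ (norm_nonneg _) (mem_ball_iff_norm.1 hp).le
  exact ⟨sub_nonneg.2 hle, sub_le_self _ (sq_nonneg _)⟩

variable [InnerProductSpace ℝ E]

lemma contDiff_ballCutoff (a : E) {k : WithTop ℕ∞} : ContDiff ℝ k (ballCutoff a) :=
  contDiff_const.sub (contDiff_norm_sub_sq a)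

variable [FiniteDimensional ℝ E]

lemma neg_le_driftLaplacian_ballCutoff {a p : E} (hp : p ∈ ball a 1) (b : E) :
    -(2 * finrank ℝ E + 2 * ‖b‖) ≤ driftLaplacian b (ballCutoff a) p := by
  have hconst : driftLaplacian b (fun _ : E => (1 : ℝ)) p = 0 := by simp [driftLaplacian]
  have hL : driftLaplacian b (ballCutoff a) p = 0 - (2 * finrank ℝ E + 2 * ⟪p - a, b⟫) := by
    rw [← driftLaplacian_norm_sub_sq, ← hconst]
    exact driftLaplacian_sub contDiff_const (contDiff_norm_sub_sq a)
  have hle : ⟪p - a, b⟫ ≤ 1 * ‖b‖ := (real_inner_le_norm _ _).trans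
    (mul_le_mul_of_nonneg_right (mem_ball_iff_norm.1 hp).le (norm_nonneg b))
  linarith

lemma norm_gradient_ballCutoff_sq_le {a p : E} (hp : p ∈ ball a 1) :
    ‖∇ (ballCutoff a) p‖ ^ 2 ≤ 4 := by
  have hgrad : ∇ (ballCutoff a) p = 0 - (2 : ℝ) • (p - a) := by
    rw [← gradient_norm_sub_sq, ← gradient_fun_const p (1 : ℝ)]
    exact gradient_sub (differentiableAt_const _)
      ((contDiff_norm_sub_sq a).differentiable two_ne_zero p)
  have hle : ‖p - a‖ ≤ 1 := (mem_ball_iff_norm.1 hp).le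
  calc ‖∇ (ballCutoff a) p‖ ^ 2 = (2 * ‖p - a‖) ^ 2 := by
        rw [hgrad, zero_sub, norm_neg, norm_smul, Real.norm_two]
    _ ≤ (2 * 1) ^ 2 := by gcongr
    _ = 4 := by norm_num

end BallCutoff

section GradientBound

variable {E G : Type*} [NormedAddCommGroup E] [InnerProductSpace ℝ E] [FiniteDimensional ℝ E]
  [NormedAddCommGroup G] [InnerProductSpace ℝ G]

lemma fderivNormSq_nonneg (f : E → G) (p : E) : 0 ≤ fderivNormSq f p :=
  Finset.sum_nonneg fun _ _ => sq_nonneg _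

lemma neg_le_mul_inner_gradient_norm_sq {f : E → G} {p : E} (hf : DifferentiableAt ℝ f p)
    (s : ℝ) (v : E) :
    -(2 * s ^ 2 * fderivNormSq f p + 8 * ‖v‖ ^ 2 * ‖f p‖ ^ 2) ≤
      4 * s * ⟪v, ∇ (fun q => ‖f q‖ ^ 2) p⟫ := by
  have hH := fderivNormSq_nonneg f p
  refine neg_le_of_abs_le (abs_le_of_sq_le_sq ?_ (by positivity))
  calc (4 * s * ⟪v, ∇ (fun q => ‖f q‖ ^ 2) p⟫) ^ 2
      = 16 * s ^ 2 * ⟪v, ∇ (fun q => ‖f q‖ ^ 2) p⟫ ^ 2 := by ring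
    _ ≤ 16 * s ^ 2 * (‖v‖ * ‖∇ (fun q => ‖f q‖ ^ 2) p‖) ^ 2 := by
      gcongr 16 * s ^ 2 * ?_
      exact sq_le_sq.2 ((abs_real_inner_le_norm _ _).trans (le_abs_self _))
    _ = 16 * s ^ 2 * ‖v‖ ^ 2 * ‖∇ (fun q => ‖f q‖ ^ 2) p‖ ^ 2 := by ring
    _ ≤ 16 * s ^ 2 * ‖v‖ ^ 2 * (4 * ‖f p‖ ^ 2 * fderivNormSq f p) := by
      gcongr
      exact norm_gradient_norm_sq_sq_le hf
    _ ≤ (2 * s ^ 2 * fderivNormSq f p + 8 * ‖v‖ ^ 2 * ‖f p‖ ^ 2) ^ 2 := by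
      linarith [sq_nonneg (2 * s ^ 2 * fderivNormSq f p - 8 * ‖v‖ ^ 2 * ‖f p‖ ^ 2)]

lemma le_driftLaplacian_sq_mul_norm_sq {b p : E} {η : E → ℝ} {f : E → G} (hη : ContDiff ℝ 2 η)
    (hf : ContDiff ℝ 2 f) :
    2 * η p ^ 2 * ⟪f p, driftLaplacian b f p⟫ +
        (2 * η p * driftLaplacian b η p - 6 * ‖∇ η p‖ ^ 2) * ‖f p‖ ^ 2 ≤
      driftLaplacian b (fun q => η q ^ 2 * ‖f q‖ ^ 2) p := by
  have hgrad : ∇ (fun q => η q ^ 2) p = (2 * η p) • ∇ η p := by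
    rw [gradient_comp (φ := fun s => s ^ 2) (by fun_prop) (hη.differentiable two_ne_zero p)]
    simp
  rw [driftLaplacian_mul (hη.pow 2) (hf.norm_sq ℝ), driftLaplacian_sq hη,
    driftLaplacian_norm_sq hf, hgrad, real_inner_smul_left]
  linarith [neg_le_mul_inner_gradient_norm_sq (hf.differentiable two_ne_zero p) (η p) (∇ η p)]

lemma neg_le_driftLaplacian_ballCutoff_sq_mul_norm_gradient_sq {u : E → ℝ} {a b p : E} {K : ℝ}
    (hu : ContDiff ℝ 3 u) (hK : 0 ≤ K)
    (hgrad : -(K * ‖∇ u p‖ ^ 2) ≤ ⟪∇ u p, ∇ (driftLaplacian b u) p⟫) (hp : p ∈ ball a 1) :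
    -((2 * K + 2 * (2 * finrank ℝ E + 2 * ‖b‖) + 24) * ‖∇ u p‖ ^ 2) ≤
      driftLaplacian b (fun q => ballCutoff a q ^ 2 * ‖∇ u q‖ ^ 2) p := by
  obtain ⟨hη₀, hη₁⟩ := ballCutoff_mem_Icc hp
  have hreaction : -(K * ‖∇ u p‖ ^ 2) ≤
      ballCutoff a p ^ 2 * ⟪∇ u p, ∇ (driftLaplacian b u) p⟫ := calc
    -(K * ‖∇ u p‖ ^ 2) ≤ -(ballCutoff a p ^ 2 * (K * ‖∇ u p‖ ^ 2)) :=
      neg_le_neg (mul_le_of_le_one_left (by positivity) (pow_le_one₀ hη₀ hη₁))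
    _ = ballCutoff a p ^ 2 * -(K * ‖∇ u p‖ ^ 2) := (mul_neg _ _).symm
    _ ≤ ballCutoff a p ^ 2 * ⟪∇ u p, ∇ (driftLaplacian b u) p⟫ := by gcongr
  have hdrift : -(2 * finrank ℝ E + 2 * ‖b‖) ≤
      ballCutoff a p * driftLaplacian b (ballCutoff a) p := calc
    -(2 * finrank ℝ E + 2 * ‖b‖) ≤ -(ballCutoff a p * (2 * finrank ℝ E + 2 * ‖b‖)) :=
      neg_le_neg (mul_le_of_le_one_left (by positivity) hη₁)
    _ = ballCutoff a p * -(2 * finrank ℝ E + 2 * ‖b‖) := (mul_neg _ _).symm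
    _ ≤ ballCutoff a p * driftLaplacian b (ballCutoff a) p :=
      mul_le_mul_of_nonneg_left (neg_le_driftLaplacian_ballCutoff hp b) hη₀
  have hcoeff : -(2 * (2 * finrank ℝ E + 2 * ‖b‖) + 24) ≤
      2 * ballCutoff a p * driftLaplacian b (ballCutoff a) p - 6 * ‖∇ (ballCutoff a) p‖ ^ 2 := by
    linarith [norm_gradient_ballCutoff_sq_le hp]
  have hcutoff := le_driftLaplacian_sq_mul_norm_sq (b := b) (p := p) (contDiff_ballCutoff a)
    (contDiff_gradient hu (by norm_num))
  rw [driftLaplacian_gradient hu] at hcutoff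
  linarith [mul_le_mul_of_nonneg_right hcoeff (sq_nonneg ‖∇ u p‖)]

-- The term `2 l |∇u|²` in `L (l u²)` absorbs the loss in the preceding lemma.
lemma norm_gradient_sq_le_of_isLocalMax_cutoff {u : E → ℝ} {a b p : E} {M K l : ℝ}
    (hu : ContDiff ℝ 3 u) (hM : |u p| ≤ M) (hK : |driftLaplacian b u p| ≤ K)
    (hgrad : -(K * ‖∇ u p‖ ^ 2) ≤ ⟪∇ u p, ∇ (driftLaplacian b u) p⟫)
    (hl : K + (2 * finrank ℝ E + 2 * ‖b‖) + 13 ≤ l) (hp : p ∈ ball a 1)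
    (hmax : IsLocalMax (fun q => ballCutoff a q ^ 2 * ‖∇ u q‖ ^ 2 + l * u q ^ 2) p) :
    ‖∇ u p‖ ^ 2 ≤ l * (M * K) := by
  have hu₂ : ContDiff ℝ 2 u := hu.of_le (by norm_num)
  have hK₀ : 0 ≤ K := (abs_nonneg _).trans hK
  have hl₀ : 0 ≤ l := le_trans (by positivity) hl
  have hcutoff := neg_le_driftLaplacian_ballCutoff_sq_mul_norm_gradient_sq hu hK₀ hgrad hp
  have hZ : ContDiff ℝ 2 fun q => ballCutoff a q ^ 2 * ‖∇ u q‖ ^ 2 :=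
    ((contDiff_ballCutoff a).pow 2).mul ((contDiff_gradient hu (by norm_num)).norm_sq ℝ)
  have hL := driftLaplacian_nonpos_of_isLocalMax (b := b)
    (hZ.add (contDiff_const.mul (hu₂.pow 2))) hmax
  rw [driftLaplacian_add hZ (contDiff_const.mul (hu₂.pow 2)),
    driftLaplacian_const_mul l (hu₂.pow 2), driftLaplacian_sq hu₂] at hL
  have huL : -(M * K) ≤ u p * driftLaplacian b u p := by
    refine neg_le_of_abs_le ?_
    rw [abs_mul]
    exact mul_le_mul hM hK (abs_nonneg _) ((abs_nonneg _).trans hM)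
  linarith [mul_le_mul_of_nonneg_left huL hl₀,
    mul_le_mul_of_nonneg_right hl (sq_nonneg ‖∇ u p‖)]

theorem norm_gradient_sq_le_of_abs_driftLaplacian_le {u : E → ℝ} {b : E} {M K : ℝ}
    (hu : ContDiff ℝ 3 u) (hM : ∀ q, |u q| ≤ M) (hK : ∀ q, |driftLaplacian b u q| ≤ K)
    (hgrad : ∀ q, -(K * ‖∇ u q‖ ^ 2) ≤ ⟪∇ u q, ∇ (driftLaplacian b u) q⟫) (a : E) :
    ‖∇ u a‖ ^ 2 ≤ (K + (2 * finrank ℝ E + 2 * ‖b‖) + 13) * (M * (K + M)) := by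
  have hM₀ : 0 ≤ M := (abs_nonneg _).trans (hM a)
  have hK₀ : 0 ≤ K := (abs_nonneg _).trans (hK a)
  set l := K + (2 * finrank ℝ E + 2 * ‖b‖) + 13
  have hl : 0 ≤ l := by positivity
  have husq (q : E) : l * u q ^ 2 ≤ l * M ^ 2 :=
    mul_le_mul_of_nonneg_left (sq_le_sq' (neg_le_of_abs_le (hM q)) (le_of_abs_le (hM q))) hl
  have hDu : Continuous (∇ u) := (contDiff_gradient (m := 2) hu (by norm_num)).continuous
  have hZ : ballCutoff a a ^ 2 * ‖∇ u a‖ ^ 2 + l * u a ^ 2 ≤ l * (M * (K + M)) := by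
    refine le_of_forall_sphere_of_forall_isLocalMax
      (f := fun q => ballCutoff a q ^ 2 * ‖∇ u q‖ ^ 2 + l * u q ^ 2)
      ((((contDiff_ballCutoff a (k := 0)).continuous.pow 2).mul (hDu.norm.pow 2)).add
        (continuous_const.mul (hu.continuous.pow 2))) zero_le_one ?_ ?_
    · intro p hp
      rw [ballCutoff_eq_zero hp]
      linarith [husq p, mul_nonneg hl (mul_nonneg hM₀ hK₀)]
    · intro p hp hmax
      obtain ⟨hη₀, hη₁⟩ := ballCutoff_mem_Icc hp
      have hw := norm_gradient_sq_le_of_isLocalMax_cutoff hu (hM p) (hK p) (hgrad p) le_rfl hp hmax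
      have hηw := mul_le_of_le_one_left (sq_nonneg ‖∇ u p‖) (pow_le_one₀ hη₀ hη₁ (n := 2))
      linarith [husq p]
  have ha : ballCutoff a a = 1 := by simp [ballCutoff]
  rw [ha, one_pow, one_mul] at hZ
  linarith [mul_nonneg hl (sq_nonneg (u a))]

lemma exists_forall_abs_comp_le {α : Type*} {φ : ℝ → ℝ} (hφ : Continuous φ) {u : α → ℝ} {M : ℝ}
    (hM : ∀ q, |u q| ≤ M) : ∃ K, ∀ q, |φ (u q)| ≤ K := by
  obtain ⟨K, hK⟩ := (isCompact_Icc (a := -M) (b := M)).exists_bound_of_continuousOn hφ.continuousOn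
  exact ⟨K, fun q => hK _ (abs_le.1 (hM q))⟩

lemma exists_forall_norm_gradient_le {ψ : ℝ → ℝ} {u : E → ℝ} {b : E} {M : ℝ}
    (hψ : ContDiff ℝ 1 ψ) (hu : ContDiff ℝ 3 u) (hM : ∀ q, |u q| ≤ M)
    (hL : ∀ q, driftLaplacian b u q = ψ (u q)) : ∃ N, ∀ q, ‖∇ u q‖ ≤ N := by
  obtain ⟨K₀, hK₀⟩ := exists_forall_abs_comp_le hψ.continuous hM
  obtain ⟨K₁, hK₁⟩ := exists_forall_abs_comp_le hψ.continuous_deriv_one hM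
  have hgrad (q : E) : -(max K₀ K₁ * ‖∇ u q‖ ^ 2) ≤ ⟪∇ u q, ∇ (driftLaplacian b u) q⟫ := by
    rw [funext hL, gradient_comp (hψ.differentiable one_ne_zero _)
      (hu.differentiable three_ne_zero q), real_inner_smul_right, real_inner_self_eq_norm_sq,
      ← neg_mul]
    gcongr
    exact neg_le_of_abs_le ((hK₁ q).trans (le_max_right _ _))
  exact ⟨_, fun q => Real.le_sqrt_of_sq_le (norm_gradient_sq_le_of_abs_driftLaplacian_le hu hM
    (fun q => (hL q ▸ hK₀ q).trans (le_max_left _ _)) hgrad q)⟩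

end GradientBound

section ApproximateMaximum

variable {E : Type*} [NormedAddCommGroup E] [InnerProductSpace ℝ E] [FiniteDimensional ℝ E]

lemma exists_forall_sub_mul_norm_sub_sq_le {f : E → ℝ} (hf : Continuous f) {S : ℝ}
    (hS : ∀ q, f q ≤ S) (y : E) {ε : ℝ} (hε : 0 < ε) :
    ∃ p, ∀ q, f q - ε * ‖q - y‖ ^ 2 ≤ f p - ε * ‖p - y‖ ^ 2 := by
  have hnorm : Tendsto (fun q => ‖q - y‖) (cocompact E) atTop := by
    simpa only [dist_eq_norm] using tendsto_dist_right_cocompact_atTop y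
  have hquad : Tendsto (fun q => ε * ‖q - y‖ ^ 2) (cocompact E) atTop :=
    ((tendsto_pow_atTop two_ne_zero).comp hnorm).const_mul_atTop hε
  refine Continuous.exists_forall_ge' (x₀ := y) (by fun_prop) ?_
  filter_upwards [hquad.eventually_ge_atTop (S - f y)] with q hq
  simp only [sub_self, norm_zero]
  linarith [hS q]

lemma gradient_and_driftLaplacian_of_isLocalMax_sub {f : E → ℝ} {b p y : E} {ε : ℝ}
    (hf : ContDiff ℝ 2 f) (hmax : IsLocalMax (fun q => f q - ε * ‖q - y‖ ^ 2) p) :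
    ∇ f p = (2 * ε) • (p - y) ∧
      driftLaplacian b f p ≤ ε * (2 * finrank ℝ E + 2 * ⟪p - y, b⟫) := by
  have hquad : ContDiff ℝ 2 fun q => ε * ‖q - y‖ ^ 2 :=
    contDiff_const.mul (contDiff_norm_sub_sq y)
  have hquad_grad : ∇ (fun q => ε * ‖q - y‖ ^ 2) p = ε • (2 : ℝ) • (p - y) := by
    rw [gradient_comp (φ := fun s => ε * s) (by fun_prop)
      ((contDiff_norm_sub_sq y).differentiable two_ne_zero p), gradient_norm_sub_sq]
    simp
  constructor
  · have h : ∇ (fun q => f q - ε * ‖q - y‖ ^ 2) p = 0 := by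
      rw [gradient, hmax.fderiv_eq_zero, map_zero]
    rw [gradient_sub (hf.differentiable two_ne_zero p) (hquad.differentiable two_ne_zero p),
      hquad_grad, sub_eq_zero] at h
    rw [h, smul_smul, mul_comm]
  · have h := driftLaplacian_nonpos_of_isLocalMax (b := b) (hf.sub hquad) hmax
    rw [driftLaplacian_sub hf hquad, driftLaplacian_const_mul ε (contDiff_norm_sub_sq y),
      driftLaplacian_norm_sub_sq] at h
    exact sub_nonpos.1 h

theorem exists_norm_gradient_le_driftLaplacian_le {f : E → ℝ} (hf : ContDiff ℝ 2 f) {S : ℝ}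
    (hS : ∀ q, f q ≤ S) (b y : E) {δ : ℝ} (hδ : 0 < δ) :
    ∃ p, f y ≤ f p ∧ ‖∇ f p‖ ≤ δ ∧ driftLaplacian b f p ≤ δ := by
  -- A maximum point `p` of `f - τ² |· - y|²` has `τ |p - y| ≤ √(S - f y)`, so `∇ f p` and the
  -- positive part of `L f p` are `O(τ)`.
  have hsmall : ∀ᶠ τ : ℝ in 𝓝[>] 0, 2 * τ * √(S - f y) < δ ∧
      2 * τ ^ 2 * finrank ℝ E + 2 * τ * √(S - f y) * ‖b‖ < δ := by
    refine eventually_nhdsWithin_of_eventually_nhds ?_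
    exact (ContinuousAt.eventually_lt (by fun_prop) continuousAt_const (by simpa)).and
      (ContinuousAt.eventually_lt (by fun_prop) continuousAt_const (by simpa))
  obtain ⟨τ, ⟨hgrad, hL⟩, hτ : 0 < τ⟩ := (hsmall.and self_mem_nhdsWithin).exists
  obtain ⟨p, hp⟩ := exists_forall_sub_mul_norm_sub_sq_le hf.continuous hS y (pow_pos hτ 2)
  obtain ⟨hgrad_eq, hL_le⟩ := gradient_and_driftLaplacian_of_isLocalMax_sub (b := b) hf
    (Eventually.of_forall hp)
  have hpy : f y ≤ f p - τ ^ 2 * ‖p - y‖ ^ 2 := by simpa using hp y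
  have hdist : τ * ‖p - y‖ ≤ √(S - f y) := Real.le_sqrt_of_sq_le (by linarith [hS p])
  refine ⟨p, hpy.trans (sub_le_self _ (by positivity)), ?_, ?_⟩
  · calc ‖∇ f p‖ = 2 * τ * (τ * ‖p - y‖) := by
          rw [hgrad_eq, norm_smul, Real.norm_of_nonneg (by positivity)]
          ring
      _ ≤ 2 * τ * √(S - f y) := by gcongr
      _ ≤ δ := hgrad.le
  · calc driftLaplacian b f p ≤ τ ^ 2 * (2 * finrank ℝ E + 2 * ⟪p - y, b⟫) := hL_le
      _ ≤ τ ^ 2 * (2 * finrank ℝ E + 2 * (‖p - y‖ * ‖b‖)) := by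
        gcongr
        exact real_inner_le_norm _ _
      _ = 2 * τ ^ 2 * finrank ℝ E + 2 * τ * (τ * ‖p - y‖) * ‖b‖ := by ring
      _ ≤ 2 * τ ^ 2 * finrank ℝ E + 2 * τ * √(S - f y) * ‖b‖ := by gcongr
      _ ≤ δ := hL.le

end ApproximateMaximum

section Modica

variable {E : Type*} [NormedAddCommGroup E] [InnerProductSpace ℝ E] [FiniteDimensional ℝ E]

/-- The `P`-function `|∇u|² - 2 G(u)` of Modica and Sperb. -/
noncomputable def pFunction (G : ℝ → ℝ) (u : E → ℝ) (p : E) : ℝ :=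
  ‖∇ u p‖ ^ 2 - 2 * G (u p)

variable {G ψ : ℝ → ℝ} {u : E → ℝ} {b : E}

lemma contDiff_pFunction (hG : ContDiff ℝ 2 G) (hu : ContDiff ℝ 3 u) :
    ContDiff ℝ 2 (pFunction G u) :=
  ((contDiff_gradient hu (by norm_num)).norm_sq ℝ).sub
    (contDiff_const.mul (hG.comp (hu.of_le (by norm_num))))

lemma gradient_norm_gradient_sq (hG : ContDiff ℝ 2 G) (hu : ContDiff ℝ 3 u) (p : E) :
    ∇ (fun q => ‖∇ u q‖ ^ 2) p = ∇ (pFunction G u) p + (2 * deriv G (u p)) • ∇ u p := by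
  have hu₁ := hu.differentiable three_ne_zero p
  have hGu : ∇ (fun q => 2 * G (u q)) p = (2 * deriv G (u p)) • ∇ u p := by
    rw [gradient_comp (φ := fun s => 2 * G s)
      ((hG.differentiable two_ne_zero _).const_mul 2) hu₁, deriv_const_mul_field]
  have hDu : ContDiff ℝ 2 (∇ u) := contDiff_gradient hu (by norm_num)
  rw [← hGu, eq_comm, ← eq_sub_iff_add_eq]
  exact gradient_sub ((hDu.norm_sq ℝ).differentiable two_ne_zero p)
    (((hG.differentiable two_ne_zero _).comp p hu₁).const_mul 2)

lemma driftLaplacian_pFunction (hψ : ContDiff ℝ 1 ψ) (hG : ContDiff ℝ 2 G) (hu : ContDiff ℝ 3 u)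
    (hL : ∀ q, driftLaplacian b u q = ψ (u q)) (p : E) :
    driftLaplacian b (pFunction G u) p = 2 * fderivNormSq (∇ u) p +
      2 * (deriv ψ (u p) - deriv (deriv G) (u p)) * ‖∇ u p‖ ^ 2 -
      2 * deriv G (u p) * ψ (u p) := by
  have hu₂ : ContDiff ℝ 2 u := hu.of_le (by norm_num)
  have hDu : ContDiff ℝ 2 (∇ u) := contDiff_gradient hu (by norm_num)
  have hGu : ContDiff ℝ 2 fun q => G (u q) := hG.comp hu₂
  have hbochner : driftLaplacian b (fun q => ‖∇ u q‖ ^ 2) p =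
      2 * fderivNormSq (∇ u) p + 2 * deriv ψ (u p) * ‖∇ u p‖ ^ 2 := by
    rw [driftLaplacian_norm_sq hDu, driftLaplacian_gradient hu, funext hL,
      gradient_comp (hψ.differentiable one_ne_zero _) (hu.differentiable three_ne_zero p),
      real_inner_smul_right, real_inner_self_eq_norm_sq]
    ring
  have hsub : driftLaplacian b (pFunction G u) p = driftLaplacian b (fun q => ‖∇ u q‖ ^ 2) p -
      driftLaplacian b (fun q => 2 * G (u q)) p :=
    driftLaplacian_sub (hDu.norm_sq ℝ) (contDiff_const.mul hGu)
  rw [hsub, hbochner, driftLaplacian_const_mul 2 hGu, driftLaplacian_comp hG hu₂, hL]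
  ring

theorem modica_inequality (hψ : ContDiff ℝ 1 ψ) (hG : ContDiff ℝ 2 G) (hu : ContDiff ℝ 3 u)
    (hL : ∀ q, driftLaplacian b u q = ψ (u q)) (p : E) :
    2 * ‖∇ u p‖ ^ 2 * (deriv G (u p) * (deriv G (u p) - ψ (u p)) +
        (deriv ψ (u p) - deriv (deriv G) (u p)) * ‖∇ u p‖ ^ 2) ≤
      ‖∇ u p‖ ^ 2 * driftLaplacian b (pFunction G u) p +
        2 * |deriv G (u p)| * ‖∇ u p‖ * ‖∇ (pFunction G u) p‖ := by
  have hDu : DifferentiableAt ℝ (∇ u) p :=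
    (contDiff_gradient (m := 2) hu (by norm_num)).differentiable two_ne_zero p
  have hkato := norm_gradient_norm_sq_sq_le hDu
  rw [gradient_norm_gradient_sq hG hu, norm_add_sq_real, norm_smul, mul_pow, Real.norm_eq_abs,
    sq_abs, real_inner_smul_right] at hkato
  have hcross : -(|deriv G (u p)| * (‖∇ (pFunction G u) p‖ * ‖∇ u p‖)) ≤
      deriv G (u p) * ⟪∇ (pFunction G u) p, ∇ u p⟫ := by
    refine neg_le_of_abs_le ?_
    rw [abs_mul]
    gcongr
    exact abs_real_inner_le_norm _ _
  rw [driftLaplacian_pFunction hψ hG hu hL]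
  linarith [sq_nonneg ‖∇ (pFunction G u) p‖]

lemma exists_le_pFunction_and_modica_lt (hψ : ContDiff ℝ 1 ψ) (hG : ContDiff ℝ 2 G)
    (hu : ContDiff ℝ 3 u) {M : ℝ} (hM : ∀ q, |u q| ≤ M)
    (hL : ∀ q, driftLaplacian b u q = ψ (u q)) (y : E) {ν : ℝ} (hν : 0 < ν) :
    ∃ p, pFunction G u y ≤ pFunction G u p ∧
      ‖∇ u p‖ ^ 2 * (deriv G (u p) * (deriv G (u p) - ψ (u p)) +
        (deriv ψ (u p) - deriv (deriv G) (u p)) * ‖∇ u p‖ ^ 2) < ν := by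
  obtain ⟨N, hN⟩ := exists_forall_norm_gradient_le hψ hu hM hL
  obtain ⟨K₀, hK₀⟩ := exists_forall_abs_comp_le hG.continuous hM
  obtain ⟨K₁, hK₁⟩ := exists_forall_abs_comp_le (hG.continuous_deriv one_le_two) hM
  have hN₀ : 0 ≤ N := (norm_nonneg _).trans (hN y)
  have hK₁₀ : 0 ≤ K₁ := (abs_nonneg _).trans (hK₁ y)
  have hP (q : E) : pFunction G u q ≤ N ^ 2 + 2 * K₀ := by
    have hw : ‖∇ u q‖ ^ 2 ≤ N ^ 2 := pow_le_pow_left₀ (norm_nonneg _) (hN q) 2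
    rw [pFunction]
    linarith [neg_le_of_abs_le (hK₀ q)]
  have hC : 0 < N ^ 2 + 2 * K₁ * N + 1 := by positivity
  obtain ⟨p, hyp, hgrad, hLP⟩ := exists_norm_gradient_le_driftLaplacian_le
    (contDiff_pFunction hG hu) hP b y (div_pos hν hC)
  set δ := ν / (N ^ 2 + 2 * K₁ * N + 1)
  have hδ : δ * (N ^ 2 + 2 * K₁ * N + 1) = ν := div_mul_cancel₀ ν hC.ne'
  have hδ₀ : 0 < δ := div_pos hν hC
  have hsmall : ‖∇ u p‖ ^ 2 * driftLaplacian b (pFunction G u) p +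
      2 * |deriv G (u p)| * ‖∇ u p‖ * ‖∇ (pFunction G u) p‖ ≤
      N ^ 2 * δ + 2 * K₁ * N * δ := by
    gcongr ?_ + 2 * ?_ * ?_ * ?_
    · exact (mul_le_mul_of_nonneg_left hLP (sq_nonneg _)).trans
        (mul_le_mul_of_nonneg_right (pow_le_pow_left₀ (norm_nonneg _) (hN p) 2) hδ₀.le)
    · exact hK₁ p
    · exact hN p
  exact ⟨p, hyp, by linarith [modica_inequality hψ hG hu hL p]⟩

end Modica

lemma exists_concave_perturbation {m κ : ℝ} (hm : 0 < m) (hκ : 0 < κ) (M : ℝ) :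
    ∃ h : ℝ → ℝ, ContDiff ℝ 2 h ∧ (∀ s, deriv (deriv h) s = -κ * deriv h s) ∧
      ∃ θ > 0, ∀ s, |s| ≤ M → h s ∈ Set.Icc 0 m ∧ θ ≤ deriv h s := by
  have hexp (s : ℝ) : HasDerivAt (fun s => exp (-κ * (s + M))) (-κ * exp (-κ * (s + M))) s := by
    simpa [mul_comm] using (((hasDerivAt_id s).add_const M).const_mul (-κ)).exp
  have hderiv : deriv (fun s => m * (1 - exp (-κ * (s + M)))) =
      fun s => m * κ * exp (-κ * (s + M)) := by
    ext s
    rw [(((hexp s).const_sub 1).const_mul m).deriv]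
    ring
  refine ⟨fun s => m * (1 - exp (-κ * (s + M))), by fun_prop, fun s => ?_,
    m * κ * exp (-κ * (M + M)), by positivity, fun s hs => ?_⟩
  · rw [hderiv, ((hexp s).const_mul (m * κ)).deriv]
    ring
  · obtain ⟨hMs, hsM⟩ := abs_le.1 hs
    have hle : exp (-κ * (s + M)) ≤ 1 := exp_le_one_iff.2 (by nlinarith)
    simp only [hderiv]
    refine ⟨⟨mul_nonneg hm.le (sub_nonneg.2 hle),
      mul_le_of_le_one_right hm.le (sub_le_self _ (exp_pos _).le)⟩, ?_⟩
    gcongr m * κ * exp ?_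
    nlinarith

theorem modica_gradient_estimate_traveling_wave_general {E : Type*} [NormedAddCommGroup E]
    [InnerProductSpace ℝ E] [FiniteDimensional ℝ E] {F : ℝ → ℝ} (hF : ContDiff ℝ 2 F)
    {u : E → ℝ} (hu : ContDiff ℝ 3 u) {M : ℝ} (hM : ∀ q, |u q| ≤ M) (hFu : ∀ q, 0 ≤ F (u q))
    {b : E} (heq : ∀ q, Δ u q + fderiv ℝ u q b = deriv F (u q)) (y : E) :
    ‖∇ u y‖ ^ 2 ≤ 2 * F (u y) := by
  by_contra! hlt
  have hF' : ContDiff ℝ 1 (deriv F) := hF.deriv'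
  obtain ⟨K, hK⟩ := exists_forall_abs_comp_le hF'.continuous hM
  set m := (‖∇ u y‖ ^ 2 - 2 * F (u y)) / 3 with hm_def
  have hm : 0 < m := div_pos (sub_pos.2 hlt) three_pos
  have hK₀ : 0 ≤ K := (abs_nonneg _).trans (hK y)
  -- `F + h` raises `F` by at most `m`, so its `P`-function is still at least `m` at `y`; and since
  -- `h'' = -κ h'`, the value of `κ` makes `F' + h' + κ |∇u|² ≥ 1` wherever `|∇u|² ≥ m`.
  obtain ⟨h, hh, hODE, θ, hθ, hbound⟩ :=
    exists_concave_perturbation (κ := (K + 1) / m) hm (by positivity) M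
  have hderiv : deriv (fun s => F s + h s) = fun s => deriv F s + deriv h s :=
    funext fun s => deriv_fun_add (hF.differentiable two_ne_zero s)
      (hh.differentiable two_ne_zero s)
  obtain ⟨p, hyp, hp⟩ :=
    exists_le_pFunction_and_modica_lt hF' (hF.add hh) hu hM heq y (mul_pos hm hθ)
  obtain ⟨⟨hhp, -⟩, hθp⟩ := hbound (u p) (hM p)
  have hmw : m ≤ ‖∇ u p‖ ^ 2 := by
    simp only [pFunction] at hyp
    linarith [(hbound (u y) (hM y)).1.2, hFu p]
  have hκw : K + 1 ≤ (K + 1) / m * ‖∇ u p‖ ^ 2 := by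
    rw [div_mul_eq_mul_div, le_div_iff₀ hm]
    gcongr
  have hreaction : θ ≤ deriv h (u p) * (deriv F (u p) + deriv h (u p) +
      (K + 1) / m * ‖∇ u p‖ ^ 2) :=
    hθp.trans (le_mul_of_one_le_right (hθ.le.trans hθp)
      (by linarith [neg_le_of_abs_le (hK p)]))
  have hderiv₂ : deriv (deriv fun s => F s + h s) (u p) =
      deriv (deriv F) (u p) - (K + 1) / m * deriv h (u p) := by
    rw [hderiv, deriv_fun_add (hF'.differentiable one_ne_zero _)
      (hh.deriv'.differentiable one_ne_zero _), hODE]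
    ring
  rw [hderiv₂, hderiv] at hp
  refine hp.not_ge ?_
  calc m * θ ≤ ‖∇ u p‖ ^ 2 * (deriv h (u p) * (deriv F (u p) + deriv h (u p) +
        (K + 1) / m * ‖∇ u p‖ ^ 2)) := by gcongr
    _ = _ := by ring

section PartialDerivatives

variable {n : ℕ} {u : (Fin n → ℝ) → ℝ}

lemma contDiff_comp_ofLp {k : WithTop ℕ∞} (hu : ContDiff ℝ k u) :
    ContDiff ℝ k fun x : EuclideanSpace ℝ (Fin n) => u x.ofLp :=
  hu.comp PiLp.contDiff_ofLp

lemma pd_ofLp {x : EuclideanSpace ℝ (Fin n)} (hu : DifferentiableAt ℝ u x.ofLp) (i : Fin n) :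
    pd i u x.ofLp =
      fderiv ℝ (fun x : EuclideanSpace ℝ (Fin n) => u x.ofLp) x (EuclideanSpace.single i 1) := by
  have hofLp : HasFDerivAt (fun x : EuclideanSpace ℝ (Fin n) => u x.ofLp) _ x :=
    hu.hasFDerivAt.comp x (PiLp.hasFDerivAt_ofLp 2 x)
  have hline : HasDerivAt (fun t => u (Function.update x.ofLp i t))
      (fderiv ℝ u x.ofLp (Pi.single i 1)) (x.ofLp i) :=
    HasFDerivAt.comp_hasDerivAt_of_eq _ hu.hasFDerivAt
      (hasDerivAt_update x.ofLp i (x.ofLp i)) (by simp)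
  rw [pd, hline.deriv, hofLp.fderiv]
  rfl

lemma driftLaplacian_comp_ofLp (hu : ContDiff ℝ 2 u) (c : ℝ) (k : Fin n)
    (x : EuclideanSpace ℝ (Fin n)) :
    driftLaplacian (c • EuclideanSpace.single k 1)
        (fun x : EuclideanSpace ℝ (Fin n) => u x.ofLp) x =
      ∑ i, pd i (pd i u) x.ofLp + c * pd k u x.ofLp := by
  have hu₁ : Differentiable ℝ u := hu.differentiable two_ne_zero
  have hpd (i : Fin n) : Differentiable ℝ (pd i u) := by
    have hpd_eq : pd i u = fun q => fderiv ℝ (fun x : EuclideanSpace ℝ (Fin n) => u x.ofLp)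
        (WithLp.toLp 2 q) (EuclideanSpace.single i 1) :=
      funext fun q => pd_ofLp (x := WithLp.toLp 2 q) (hu₁ q) i
    rw [hpd_eq]
    exact ((contDiff_fderiv_apply_const (m := 1) (contDiff_comp_ofLp hu) (by norm_num) _).comp
      PiLp.contDiff_toLp).differentiable one_ne_zero
  rw [driftLaplacian, map_smul, smul_eq_mul, ← pd_ofLp (hu₁ _),
    laplacian_eq_sum_fderiv_fderiv (EuclideanSpace.basisFun (Fin n) ℝ) (contDiff_comp_ofLp hu)]
  simp only [EuclideanSpace.basisFun_apply, ← pd_ofLp (hu₁ _), ← pd_ofLp (hpd _ _)]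

lemma sum_pd_sq_ofLp {x : EuclideanSpace ℝ (Fin n)} (hu : DifferentiableAt ℝ u x.ofLp) :
    ∑ i, pd i u x.ofLp ^ 2 = ‖∇ (fun x : EuclideanSpace ℝ (Fin n) => u x.ofLp) x‖ ^ 2 := by
  rw [← (EuclideanSpace.basisFun (Fin n) ℝ).sum_sq_inner_left]
  simp only [pd_ofLp hu, inner_gradient_left, EuclideanSpace.basisFun_apply]

end PartialDerivatives

/-- Modica-type gradient estimate for traveling waves (Proposition 4.5):
if `F ≥ 0` on `[-1,1]`, `c > 0` and `u` is a `C³` solution of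
`Δu + c ∂u/∂xₙ = F'(u)` on `ℝⁿ` with `|u| ≤ 1`, then `|∇u|² ≤ 2F(u)`. -/
theorem modica_gradient_estimate_traveling_wave
    (n : ℕ) (hn : 1 ≤ n)
    (F : ℝ → ℝ) (hF : ContDiff ℝ 2 F)
    (hFpos : ∀ s ∈ Set.Icc (-1 : ℝ) 1, 0 ≤ F s)
    (c : ℝ) (hc : 0 < c)
    (u : (Fin n → ℝ) → ℝ) (hu : ContDiff ℝ 3 u)
    (hbd : ∀ p : Fin n → ℝ, |u p| ≤ 1)
    (heq : ∀ p : Fin n → ℝ,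
      (∑ i : Fin n, pd i (pd i u) p) + c * pd ⟨n - 1, by omega⟩ u p =
        deriv F (u p)) :
    ∀ p : Fin n → ℝ, ∑ i : Fin n, (pd i u p) ^ 2 ≤ 2 * F (u p) := by
  intro p
  rw [sum_pd_sq_ofLp (x := WithLp.toLp 2 p) (hu.differentiable three_ne_zero p)]
  exact modica_gradient_estimate_traveling_wave_general hF (contDiff_comp_ofLp hu)
    (fun x => hbd x.ofLp) (fun x => hFpos _ (abs_le.1 (hbd x.ofLp)))
    (fun x => (driftLaplacian_comp_ofLp (hu.of_le (by norm_num)) c _ x).trans (heq x.ofLp)) _
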